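/- arXiv:2311.17579 — 3 statements merged into one kernel-verified Lean document; each statement's English description precedes it below -/
import Mathlib

section
/- Let N ≥ 1 and 0 < q < 1. There exists γ* > 0 such that for every γ with 0 < γ < γ* the following comparison principle holds. Let u₀, v₀ : ℝ^N → ℝ be non-negative continuous functions vanishing at infinity with u₀ ≥ v₀ and u₀ not identically zero. Suppose u, v : ℝ^N × [0,∞) → ℝ are non-negative, for every t ≥ 0 the maps x ↦ u(x,t) and x ↦ v(x,t) are continuous and vanish at infinity, t ↦ u(·,t) and t ↦ v(·,t) are continuous into the bounded continuous functions with the sup norm, and for all t ≥ 0 and x ∈ ℝ^N: u(x,t) ≥ ∫_{ℝ^N} G_t(x−y) u₀(y) dy + ∫₀ᵗ ∫_{ℝ^N} G_{t−σ}(x−y) |y|^{−γ} u(y,σ)^q dy dσ and v(x,t) ≤ ∫_{ℝ^N} G_t(x−y) v₀(y) dy + ∫₀ᵗ ∫_{ℝ^N} G_{t−σ}(x−y) |y|^{−γ} v(y,σ)^q dy dσ. Then u(x,t) ≥ v(x,t) for all x ∈ ℝ^N and t ≥ 0. -/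
open MeasureTheory Filter Real

/-- The heat kernel `G_t(x) = (4πt)^{-N/2} exp(-|x|²/(4t))` on `ℝ^N`. -/
noncomputable def heatKernel (N : ℕ) (t : ℝ) (x : EuclideanSpace ℝ (Fin N)) : ℝ :=
  (4 * π * t) ^ (-(N : ℝ) / 2) * Real.exp (-‖x‖ ^ 2 / (4 * t))

/-- `w` belongs to `C([0,∞); C₀(ℝ^N))` and is non-negative: for every `t ≥ 0`
the map `x ↦ w(x,t)` is continuous and vanishes at infinity, and `t ↦ w(·,t)`
is continuous in the sup norm. -/
def IsAdmissible (N : ℕ) (w : EuclideanSpace ℝ (Fin N) → ℝ → ℝ) : Prop :=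
  (∀ x t, 0 ≤ t → 0 ≤ w x t) ∧
  (∀ t, 0 ≤ t → Continuous (fun x => w x t)) ∧
  (∀ t, 0 ≤ t → Tendsto (fun x => w x t)
    (cocompact (EuclideanSpace ℝ (Fin N))) (nhds 0)) ∧
  (∀ t₀, 0 ≤ t₀ → ∀ ε > (0 : ℝ), ∃ δ > (0 : ℝ), ∀ t, 0 ≤ t →
    |t - t₀| < δ → ∀ x, |w x t - w x t₀| ≤ ε)

section HeatKernel

variable {N : ℕ}

lemma heatKernel_nonneg {t : ℝ} (ht : 0 < t) (x : EuclideanSpace ℝ (Fin N)) :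
    0 ≤ heatKernel N t x := by
  unfold heatKernel; positivity

lemma integrable_exp_neg_mul_norm_sq {b : ℝ} (hb : 0 < b) :
    Integrable fun x : EuclideanSpace ℝ (Fin N) => Real.exp (-b * ‖x‖ ^ 2) := by
  have h := (GaussianFourier.integrable_cexp_neg_mul_sq_norm_add (V := EuclideanSpace ℝ (Fin N))
    (b := (b : ℂ)) (by simpa using hb) 0 0).norm
  refine h.congr (Eventually.of_forall fun x => ?_)
  simp only [Complex.norm_exp]
  norm_cast
  simp

lemma heatKernel_eq (t : ℝ) (x : EuclideanSpace ℝ (Fin N)) :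
    heatKernel N t x = (4 * π * t) ^ (-(N : ℝ) / 2) * Real.exp (-(1 / (4 * t)) * ‖x‖ ^ 2) := by
  unfold heatKernel
  congr 2
  ring

lemma integrable_heatKernel {t : ℝ} (ht : 0 < t) (x : EuclideanSpace ℝ (Fin N)) :
    Integrable fun y => heatKernel N t (x - y) := by
  have h : Integrable (heatKernel N t) := by
    simp_rw [funext (heatKernel_eq (N := N) t)]
    exact (integrable_exp_neg_mul_norm_sq (by positivity)).const_mul _
  exact h.comp_sub_left x

lemma integral_heatKernel {t : ℝ} (ht : 0 < t) (x : EuclideanSpace ℝ (Fin N)) :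
    ∫ y, heatKernel N t (x - y) = 1 := by
  rw [integral_sub_left_eq_self (heatKernel N t) volume x]
  simp_rw [heatKernel_eq]
  rw [integral_const_mul, GaussianFourier.integral_rexp_neg_mul_sq_norm (by positivity)]
  have : π / (1 / (4 * t)) = 4 * π * t := by field_simp
  rw [this, ← Real.rpow_add (by positivity), finrank_euclideanSpace_fin]
  ring_nf
  exact Real.rpow_zero _

lemma rpow_neg_natCast_div_two {a : ℝ} (ha : 0 ≤ a) : a ^ (-(N : ℝ) / 2) = (√a ^ N)⁻¹ := by
  rw [Real.sqrt_eq_rpow, ← Real.rpow_natCast, ← Real.rpow_mul ha, ← Real.rpow_neg ha]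
  ring_nf

/-- The heat kernel is bounded by a power of the parabolic distance. -/
lemma heatKernel_le {t : ℝ} (ht : 0 < t) (z : EuclideanSpace ℝ (Fin N)) :
    heatKernel N t z ≤ N.factorial * Real.exp 2 * ((√t + ‖z‖) ^ N)⁻¹ := by
  have hs : 0 < √t := Real.sqrt_pos.2 ht
  have hst : √t ^ 2 = t := Real.sq_sqrt ht.le
  set τ := ‖z‖ / √t with hτ
  have hz : ‖z‖ = τ * √t := by rw [hτ]; field_simp
  have hτ0 : 0 ≤ τ := by positivity
  have h1 : (4 * π * t) ^ (-(N : ℝ) / 2) ≤ (√t ^ N)⁻¹ := by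
    rw [← rpow_neg_natCast_div_two ht.le]
    refine Real.rpow_le_rpow_of_nonpos ht ?_ ?_
    · nlinarith [Real.pi_gt_three]
    · have : (0 : ℝ) ≤ N := Nat.cast_nonneg N
      linarith
  have h2 : -‖z‖ ^ 2 / (4 * t) = -(τ ^ 2 / 4) := by
    rw [hz, mul_pow, hst]; field_simp
  have h3 : (1 + τ) ^ N ≤ N.factorial * Real.exp (1 + τ) := by
    have := Real.pow_div_factorial_le_exp (x := 1 + τ) (by positivity) N
    rwa [div_le_iff₀' (by positivity)] at this
  have h4 : Real.exp (1 + τ) * Real.exp (-(τ ^ 2 / 4)) ≤ Real.exp 2 := by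
    rw [← Real.exp_add]
    exact Real.exp_le_exp.2 (by nlinarith [sq_nonneg (τ - 2)])
  have h5 : √t + ‖z‖ = √t * (1 + τ) := by rw [hz]; ring
  unfold heatKernel
  rw [h2, h5, mul_pow, mul_inv]
  calc _ ≤ (√t ^ N)⁻¹ * Real.exp (-(τ ^ 2 / 4)) := by gcongr
    _ = (√t ^ N)⁻¹ * ((1 + τ) ^ N)⁻¹ * ((1 + τ) ^ N * Real.exp (-(τ ^ 2 / 4))) := by
      field_simp
    _ ≤ (√t ^ N)⁻¹ * ((1 + τ) ^ N)⁻¹ *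
        ((N.factorial * Real.exp (1 + τ)) * Real.exp (-(τ ^ 2 / 4))) := by gcongr
    _ = (√t ^ N)⁻¹ * ((1 + τ) ^ N)⁻¹ *
        (N.factorial * (Real.exp (1 + τ) * Real.exp (-(τ ^ 2 / 4)))) := by ring
    _ ≤ (√t ^ N)⁻¹ * ((1 + τ) ^ N)⁻¹ * (N.factorial * Real.exp 2) := by gcongr
    _ = _ := by ring

lemma integrableOn_ball_norm_rpow_neg [NeZero N] {γ : ℝ} (hγN : γ < N) (r : ℝ) :
    IntegrableOn (fun y : EuclideanSpace ℝ (Fin N) => ‖y‖ ^ (-γ)) (Metric.ball 0 r) := by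
  refine integrableOn_ball_of_norm_le_rpow (C := 1) (α := γ) ?_ ?_ ?_ ?_
  · rw [finrank_euclideanSpace_fin]; exact NeZero.one_le
  · rwa [finrank_euclideanSpace_fin]
  · refine Eventually.of_forall fun x => ?_
    rw [one_mul, Real.norm_of_nonneg (by positivity)]
  · exact Measurable.aestronglyMeasurable (by fun_prop)

lemma setIntegral_ball_norm_rpow_neg {γ r : ℝ} (hr : 0 < r) :
    ∫ y in Metric.ball (0 : EuclideanSpace ℝ (Fin N)) r, ‖y‖ ^ (-γ) =
      r ^ N * r ^ (-γ) * ∫ y in Metric.ball (0 : EuclideanSpace ℝ (Fin N)) 1, ‖y‖ ^ (-γ) := by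
  have h := Measure.setIntegral_comp_smul_of_pos volume
    (fun y : EuclideanSpace ℝ (Fin N) => ‖y‖ ^ (-γ)) (Metric.ball 0 1) hr
  rw [smul_ball hr.ne', smul_zero, finrank_euclideanSpace_fin, Real.norm_of_nonneg hr.le,
    mul_one] at h
  simp_rw [norm_smul, Real.norm_of_nonneg hr.le, Real.mul_rpow hr.le (norm_nonneg _)] at h
  rw [integral_const_mul, smul_eq_mul] at h
  rw [mul_assoc, h]
  field_simp

/-- The heat semigroup applied to `|y|^{-γ}` is controlled by the same power of the parabolic
distance to the origin. -/
lemma exists_heat_norm_rpow_neg_le [NeZero N] {γ : ℝ} (hγ0 : 0 ≤ γ) (hγN : γ < N) :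
    ∃ C : ℝ, 0 < C ∧ ∀ s : ℝ, 0 < s → ∀ x : EuclideanSpace ℝ (Fin N),
      Integrable (fun y => heatKernel N s (x - y) * ‖y‖ ^ (-γ)) ∧
      ∫ y, heatKernel N s (x - y) * ‖y‖ ^ (-γ) ≤ C * (√s + ‖x‖) ^ (-γ) := by
  set I := ∫ y in Metric.ball (0 : EuclideanSpace ℝ (Fin N)) 1, ‖y‖ ^ (-γ) with hI
  have hI0 : 0 ≤ I := integral_nonneg fun y => by positivity
  set K : ℝ := N.factorial * Real.exp 2 with hK
  refine ⟨(1 + K * I) * (1 / 4 : ℝ) ^ (-γ), by positivity, fun s hs x => ?_⟩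
  have hs' : 0 < √s := Real.sqrt_pos.2 hs
  set r := (1 / 4) * (√s + ‖x‖) with hr
  have hr0 : 0 < r := by positivity
  have hpt : ∀ y, heatKernel N s (x - y) * ‖y‖ ^ (-γ) ≤
      r ^ (-γ) * heatKernel N s (x - y) +
        K * (r ^ N)⁻¹ * (Metric.ball 0 r).indicator (fun y => ‖y‖ ^ (-γ)) y := by
    intro y
    have hG := heatKernel_nonneg hs (x - y)
    by_cases hy : y ∈ Metric.ball (0 : EuclideanSpace ℝ (Fin N)) r
    · rw [Set.indicator_of_mem hy]
      rw [mem_ball_zero_iff] at hy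
      have h1 : r ≤ √s + ‖x - y‖ := by
        have := norm_sub_norm_le x y
        linarith
      have h2 : heatKernel N s (x - y) ≤ K * (r ^ N)⁻¹ :=
        (heatKernel_le hs (x - y)).trans (by gcongr)
      have h3 : heatKernel N s (x - y) * ‖y‖ ^ (-γ) ≤ K * (r ^ N)⁻¹ * ‖y‖ ^ (-γ) := by gcongr
      have h4 : 0 ≤ r ^ (-γ) * heatKernel N s (x - y) := by positivity
      linarith
    · rw [Set.indicator_of_notMem hy, mul_zero, add_zero, mul_comm]
      rw [mem_ball_zero_iff, not_lt] at hy
      gcongr ?_ * _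
      exact Real.rpow_le_rpow_of_nonpos hr0 hy (by linarith)
  have hint : Integrable fun y => r ^ (-γ) * heatKernel N s (x - y) +
        K * (r ^ N)⁻¹ * (Metric.ball 0 r).indicator (fun y => ‖y‖ ^ (-γ)) y :=
    ((integrable_heatKernel hs x).const_mul _).add
      (((integrable_indicator_iff measurableSet_ball).2
        (integrableOn_ball_norm_rpow_neg hγN r)).const_mul _)
  have hmeas : Measurable fun y => heatKernel N s (x - y) * ‖y‖ ^ (-γ) := by
    unfold heatKernel; fun_prop
  have hint' : Integrable fun y => heatKernel N s (x - y) * ‖y‖ ^ (-γ) := by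
    refine hint.mono' hmeas.aestronglyMeasurable (Eventually.of_forall fun y => ?_)
    have hG := heatKernel_nonneg hs (x - y)
    rw [Real.norm_of_nonneg (by positivity)]
    exact hpt y
  refine ⟨hint', (integral_mono hint' hint hpt).trans_eq ?_⟩
  rw [integral_add ((integrable_heatKernel hs x).const_mul _)
      (((integrable_indicator_iff measurableSet_ball).2
        (integrableOn_ball_norm_rpow_neg hγN r)).const_mul _),
    integral_const_mul, integral_const_mul, integral_heatKernel hs,
    integral_indicator measurableSet_ball, setIntegral_ball_norm_rpow_neg hr0, ← hI,
    mul_assoc (1 + K * I), ← Real.mul_rpow (by norm_num) (by positivity), ← hr]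
  field_simp

/-- A lower bound of an integral by the contribution of a ball. -/
lemma mul_le_integral_of_le_on_ball {f : EuclideanSpace ℝ (Fin N) → ℝ} (hf : Integrable f)
    (hf0 : ∀ y, 0 ≤ f y) {m ρ : ℝ} (hρ : 0 < ρ) (z : EuclideanSpace ℝ (Fin N))
    (hm : ∀ᵐ y, y ∈ Metric.ball z ρ → m ≤ f y) :
    m * (ρ ^ N * volume.real (Metric.ball (0 : EuclideanSpace ℝ (Fin N)) 1)) ≤ ∫ y, f y := by
  have hvol : volume.real (Metric.ball z ρ) =
      ρ ^ N * volume.real (Metric.ball (0 : EuclideanSpace ℝ (Fin N)) 1) := by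
    rw [measureReal_def, Measure.addHaar_ball_of_pos _ _ hρ, finrank_euclideanSpace_fin,
      ENNReal.toReal_mul, ENNReal.toReal_ofReal (by positivity), measureReal_def]
  calc _ = ∫ y in Metric.ball z ρ, m := by
        rw [setIntegral_const, smul_eq_mul, hvol]; ring
    _ ≤ ∫ y in Metric.ball z ρ, f y := by
        refine setIntegral_mono_on_ae ?_ hf.integrableOn measurableSet_ball hm
        exact integrableOn_const measure_ball_lt_top.ne
    _ ≤ ∫ y, f y := setIntegral_le_integral hf (Eventually.of_forall hf0)

/-- The heat semigroup averages over balls of parabolic size. -/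
lemma exists_mul_le_heat_of_le_on_ball [NeZero N] :
    ∃ c : ℝ, 0 < c ∧ ∀ s : ℝ, 0 < s → ∀ (x : EuclideanSpace ℝ (Fin N))
      (f : EuclideanSpace ℝ (Fin N) → ℝ) (m : ℝ), 0 ≤ m →
      Integrable (fun y => heatKernel N s (x - y) * f y) → (∀ y, 0 ≤ f y) →
      (∀ y, y ≠ 0 → ‖y - x‖ ≤ √s → m ≤ f y) →
      c * m ≤ ∫ y, heatKernel N s (x - y) * f y := by
  set V := volume.real (Metric.ball (0 : EuclideanSpace ℝ (Fin N)) 1) with hV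
  have hV0 : 0 < V := ENNReal.toReal_pos (Metric.measure_ball_pos _ _ one_pos).ne'
    measure_ball_lt_top.ne
  refine ⟨(√(4 * π) ^ N)⁻¹ * Real.exp (-(1 / 4)) * V, by positivity,
    fun s hs x f m hm hint hf hmf => ?_⟩
  have hs' : 0 < √s := Real.sqrt_pos.2 hs
  have key := mul_le_integral_of_le_on_ball hint
    (fun y => mul_nonneg (heatKernel_nonneg hs _) (hf y))
    (m := (√(4 * π * s) ^ N)⁻¹ * Real.exp (-(1 / 4)) * m) hs' x ?_
  · refine le_trans (le_of_eq ?_) key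
    rw [Real.sqrt_mul (by positivity : 0 ≤ 4 * π) s, mul_pow, ← hV]
    generalize √(4 * π) = a
    field_simp
  · have h0 : ∀ᵐ y : EuclideanSpace ℝ (Fin N), y ≠ 0 := Measure.ae_ne volume 0
    filter_upwards [h0] with y hy0 hy
    have hy' : ‖y - x‖ ≤ √s := by
      rw [← dist_eq_norm]; exact (Metric.mem_ball.1 hy).le
    have hsq : ‖x - y‖ ^ 2 ≤ s := by
      rw [norm_sub_rev]
      calc _ ≤ √s ^ 2 := by gcongr
        _ = s := Real.sq_sqrt hs.le
    unfold heatKernel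
    rw [rpow_neg_natCast_div_two (by positivity)]
    gcongr
    · rw [le_div_iff₀ (by positivity)]; linarith
    · exact hmf y hy0 hy'

end HeatKernel

section Duhamel

variable {N : ℕ}

/-- The Duhamel term `∫₀ᵗ S(t-σ)[|·|^{-γ} g(σ)] dσ` of the heat semigroup `S` with source `g`. -/
noncomputable def duhamel (N : ℕ) (γ : ℝ) (g : EuclideanSpace ℝ (Fin N) → ℝ → ℝ) (t : ℝ)
    (x : EuclideanSpace ℝ (Fin N)) : ℝ :=
  ∫ σ in (0 : ℝ)..t, ∫ y, heatKernel N (t - σ) (x - y) * ‖y‖ ^ (-γ) * g y σ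

/-- Measurable sources that are bounded on the time interval `[0, T]`. -/
structure IsBoundedSource (T : ℝ) (g : EuclideanSpace ℝ (Fin N) → ℝ → ℝ) : Prop where
  measurable : Measurable fun p : ℝ × EuclideanSpace ℝ (Fin N) => g p.2 p.1
  bounded : ∃ M : ℝ, ∀ y, ∀ σ ∈ Set.Icc 0 T, |g y σ| ≤ M

namespace IsBoundedSource

variable {T γ t : ℝ} {g g₁ g₂ : EuclideanSpace ℝ (Fin N) → ℝ → ℝ}

lemma const (T a : ℝ) : IsBoundedSource (N := N) T fun _ _ => a :=
  ⟨measurable_const, |a|, fun _ _ _ => le_rfl⟩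

lemma add (h₁ : IsBoundedSource T g₁) (h₂ : IsBoundedSource T g₂) :
    IsBoundedSource T fun y σ => g₁ y σ + g₂ y σ := by
  obtain ⟨M₁, hM₁⟩ := h₁.bounded
  obtain ⟨M₂, hM₂⟩ := h₂.bounded
  exact ⟨h₁.measurable.add h₂.measurable, M₁ + M₂, fun y σ hσ =>
    (abs_add_le _ _).trans (add_le_add (hM₁ y σ hσ) (hM₂ y σ hσ))⟩

lemma const_mul (a : ℝ) (h : IsBoundedSource T g) : IsBoundedSource T fun y σ => a * g y σ := by
  obtain ⟨M, hM⟩ := h.bounded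
  refine ⟨h.measurable.const_mul a, |a| * M, fun y σ hσ => ?_⟩
  rw [abs_mul]
  exact mul_le_mul_of_nonneg_left (hM y σ hσ) (abs_nonneg a)

lemma integrable [NeZero N] (hg : IsBoundedSource T g) (hγ0 : 0 ≤ γ) (hγN : γ < N) (htT : t ≤ T)
    {σ : ℝ} (hσ : σ ∈ Set.Ico 0 t) (x : EuclideanSpace ℝ (Fin N)) :
    Integrable fun y => heatKernel N (t - σ) (x - y) * ‖y‖ ^ (-γ) * g y σ := by
  obtain ⟨C, -, hC⟩ := exists_heat_norm_rpow_neg_le hγ0 hγN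
  obtain ⟨M, hM⟩ := hg.bounded
  refine (hC (t - σ) (sub_pos.2 hσ.2) x).1.mul_bdd (c := M) ?_ ?_
  · exact (hg.measurable.comp measurable_prodMk_left).aestronglyMeasurable
  · exact Eventually.of_forall fun y => hM y σ ⟨hσ.1, hσ.2.le.trans htT⟩

lemma intervalIntegrable [NeZero N] (hg : IsBoundedSource T g) (hγ0 : 0 ≤ γ) (hγ1 : γ < 1)
    (ht : 0 < t) (htT : t ≤ T) (x : EuclideanSpace ℝ (Fin N)) :
    IntervalIntegrable
      (fun σ => ∫ y, heatKernel N (t - σ) (x - y) * ‖y‖ ^ (-γ) * g y σ) volume 0 t := by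
  have hγN : γ < N := hγ1.trans_le (by exact_mod_cast NeZero.one_le)
  obtain ⟨C, hC0, hC⟩ := exists_heat_norm_rpow_neg_le (N := N) hγ0 hγN
  obtain ⟨M, hM⟩ := hg.bounded
  have hM0 : 0 ≤ M := (abs_nonneg _).trans (hM 0 t ⟨ht.le, htT⟩)
  have hdom : IntervalIntegrable (fun σ => M * (C * (t - σ) ^ (-γ / 2))) volume 0 t := by
    have h := (intervalIntegral.intervalIntegrable_rpow' (a := 0) (b := t) (r := -γ / 2)
      (by linarith)).comp_sub_left t
    simp only [sub_zero, sub_self] at h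
    exact (h.symm.const_mul C).const_mul M
  have hmeas : StronglyMeasurable
      (fun σ => ∫ y, heatKernel N (t - σ) (x - y) * ‖y‖ ^ (-γ) * g y σ) := by
    refine StronglyMeasurable.integral_prod_right'
      (f := fun p : ℝ × EuclideanSpace ℝ (Fin N) =>
        heatKernel N (t - p.1) (x - p.2) * ‖p.2‖ ^ (-γ) * g p.2 p.1) ?_
    refine Measurable.stronglyMeasurable (Measurable.mul ?_ hg.measurable)
    unfold heatKernel
    fun_prop
  rw [intervalIntegrable_iff_integrableOn_Ioo_of_le ht.le] at hdom ⊢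
  refine hdom.mono' hmeas.aestronglyMeasurable ?_
  refine (ae_restrict_iff' measurableSet_Ioo).2 (Eventually.of_forall fun σ hσ => ?_)
  have hts : 0 < t - σ := sub_pos.2 hσ.2
  have hsq : 0 < √(t - σ) := Real.sqrt_pos.2 hts
  obtain ⟨hi, hb⟩ := hC (t - σ) hts x
  calc _ ≤ ∫ y, M * (heatKernel N (t - σ) (x - y) * ‖y‖ ^ (-γ)) := by
        refine norm_integral_le_of_norm_le (hi.const_mul M) (Eventually.of_forall fun y => ?_)
        have h0 : 0 ≤ heatKernel N (t - σ) (x - y) * ‖y‖ ^ (-γ) :=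
          mul_nonneg (heatKernel_nonneg hts _) (by positivity)
        rw [norm_mul, Real.norm_of_nonneg h0, mul_comm]
        exact mul_le_mul_of_nonneg_right (hM y σ ⟨hσ.1.le, hσ.2.le.trans htT⟩) h0
    _ ≤ M * (C * (√(t - σ) + ‖x‖) ^ (-γ)) := by
        rw [integral_const_mul]; gcongr
    _ ≤ M * (C * √(t - σ) ^ (-γ)) := by
        gcongr M * (C * ?_)
        exact Real.rpow_le_rpow_of_nonpos hsq (by linarith [norm_nonneg x]) (by linarith)
    _ = _ := by
        rw [Real.sqrt_eq_rpow, ← Real.rpow_mul hts.le]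
        ring_nf

end IsBoundedSource

lemma duhamel_const_mul {γ t : ℝ} {g : EuclideanSpace ℝ (Fin N) → ℝ → ℝ} (a : ℝ)
    (x : EuclideanSpace ℝ (Fin N)) :
    duhamel N γ (fun y σ => a * g y σ) t x = a * duhamel N γ g t x := by
  unfold duhamel
  rw [← intervalIntegral.integral_const_mul]
  congr 1 with σ
  rw [← integral_const_mul]
  congr 1 with y
  ring

variable [NeZero N] {T γ t : ℝ} {g g₁ g₂ : EuclideanSpace ℝ (Fin N) → ℝ → ℝ}

lemma duhamel_mono (h₁ : IsBoundedSource T g₁) (h₂ : IsBoundedSource T g₂) (hγ0 : 0 ≤ γ)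
    (hγ1 : γ < 1) (ht : 0 < t) (htT : t ≤ T) (h : ∀ y, ∀ σ ∈ Set.Ioo 0 t, g₁ y σ ≤ g₂ y σ)
    (x : EuclideanSpace ℝ (Fin N)) : duhamel N γ g₁ t x ≤ duhamel N γ g₂ t x := by
  have hγN : γ < N := hγ1.trans_le (by exact_mod_cast NeZero.one_le)
  refine intervalIntegral.integral_mono_on_of_le_Ioo ht.le
    (h₁.intervalIntegrable hγ0 hγ1 ht htT x) (h₂.intervalIntegrable hγ0 hγ1 ht htT x)
    fun σ hσ => ?_
  have hσ' : σ ∈ Set.Ico 0 t := ⟨hσ.1.le, hσ.2⟩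
  refine integral_mono (h₁.integrable hγ0 hγN htT hσ' x) (h₂.integrable hγ0 hγN htT hσ' x)
    fun y => ?_
  have h0 := heatKernel_nonneg (sub_pos.2 hσ.2) (x - y)
  have := h y σ hσ
  dsimp only
  gcongr

lemma duhamel_add (h₁ : IsBoundedSource T g₁) (h₂ : IsBoundedSource T g₂) (hγ0 : 0 ≤ γ)
    (hγ1 : γ < 1) (ht : 0 < t) (htT : t ≤ T) (x : EuclideanSpace ℝ (Fin N)) :
    duhamel N γ (fun y σ => g₁ y σ + g₂ y σ) t x = duhamel N γ g₁ t x + duhamel N γ g₂ t x := by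
  have hγN : γ < N := hγ1.trans_le (by exact_mod_cast NeZero.one_le)
  unfold duhamel
  rw [← intervalIntegral.integral_add (h₁.intervalIntegrable hγ0 hγ1 ht htT x)
    (h₂.intervalIntegrable hγ0 hγ1 ht htT x)]
  refine intervalIntegral.integral_congr_Ioo_of_le ht.le fun σ hσ => ?_
  have hσ' : σ ∈ Set.Ico 0 t := ⟨hσ.1.le, hσ.2⟩
  dsimp only
  rw [← integral_add (h₁.integrable hγ0 hγN htT hσ' x) (h₂.integrable hγ0 hγN htT hσ' x)]
  congr 1 with y
  ring

/-- Upper bound for the Duhamel term with constant source. -/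
lemma exists_duhamel_one_le (hγ0 : 0 ≤ γ) (hγ1 : γ < 1) :
    ∃ C : ℝ, 0 < C ∧ ∀ t : ℝ, 0 < t → ∀ x : EuclideanSpace ℝ (Fin N),
      duhamel N γ (fun _ _ => 1) t x ≤ C * (t * (√t + ‖x‖) ^ (-γ)) := by
  have hγN : γ < N := hγ1.trans_le (by exact_mod_cast NeZero.one_le)
  obtain ⟨C, hC0, hC⟩ := exists_heat_norm_rpow_neg_le (N := N) hγ0 hγN
  have hγ2 : 0 < -γ / 2 + 1 := by linarith
  refine ⟨C * (-γ / 2 + 1)⁻¹, by positivity, fun t ht x => ?_⟩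
  set D := (√t + ‖x‖) ^ (-γ) with hD
  have hst : 0 < √t := Real.sqrt_pos.2 ht
  have hdom : IntervalIntegrable (fun σ => C * (D * t ^ (γ / 2)) * (t - σ) ^ (-γ / 2))
      volume 0 t := by
    have h := (intervalIntegral.intervalIntegrable_rpow' (a := 0) (b := t) (r := -γ / 2)
      (by linarith)).comp_sub_left t
    simp only [sub_zero, sub_self] at h
    exact h.symm.const_mul _
  calc duhamel N γ (fun _ _ => 1) t x
      ≤ ∫ σ in (0 : ℝ)..t, C * (D * t ^ (γ / 2)) * (t - σ) ^ (-γ / 2) := by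
        refine intervalIntegral.integral_mono_on_of_le_Ioo ht.le
          ((IsBoundedSource.const t 1).intervalIntegrable hγ0 hγ1 ht le_rfl x) hdom
          fun σ hσ => ?_
        have hts : 0 < t - σ := sub_pos.2 hσ.2
        have hsq : 0 < √(t - σ) := Real.sqrt_pos.2 hts
        simp only [mul_one]
        refine (hC (t - σ) hts x).2.trans ?_
        rw [mul_assoc]
        gcongr C * ?_
        have hle : √(t - σ) ≤ √t := Real.sqrt_le_sqrt (by linarith [hσ.1])
        have hratio : (√t + ‖x‖) * (√(t - σ) / √t) ≤ √(t - σ) + ‖x‖ := by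
          rw [add_mul, mul_div_cancel₀ _ hst.ne']
          gcongr
          exact mul_le_of_le_one_right (norm_nonneg x) ((div_le_one hst).2 hle)
        calc (√(t - σ) + ‖x‖) ^ (-γ) ≤ ((√t + ‖x‖) * (√(t - σ) / √t)) ^ (-γ) :=
              Real.rpow_le_rpow_of_nonpos (by positivity) hratio (by linarith)
          _ = D * t ^ (γ / 2) * (t - σ) ^ (-γ / 2) := by
              rw [Real.mul_rpow (by positivity) (by positivity), ← hD,
                Real.div_rpow hsq.le hst.le, Real.rpow_neg hst.le, div_inv_eq_mul,
                Real.sqrt_eq_rpow, Real.sqrt_eq_rpow, ← Real.rpow_mul hts.le,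
                ← Real.rpow_mul ht.le]
              ring_nf
    _ = _ := by
        rw [intervalIntegral.integral_const_mul,
          intervalIntegral.integral_comp_sub_left (fun s => s ^ (-γ / 2)) t, sub_self, sub_zero,
          integral_rpow (Or.inl (by linarith)), Real.zero_rpow hγ2.ne', sub_zero,
          Real.rpow_add_one ht.ne']
        have : t ^ (γ / 2) * t ^ (-γ / 2) = 1 := by
          rw [← Real.rpow_add ht]; ring_nf; exact Real.rpow_zero t
        linear_combination (C * D * t / (-γ / 2 + 1)) * this

/-- Lower bound for the Duhamel term by the values of the source at parabolic distance at most
`√(t - σ)` from `x` at times `σ ∈ (rt, t)`. -/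
lemma exists_mul_le_duhamel (hγ0 : 0 ≤ γ) (hγ1 : γ < 1) :
    ∃ c : ℝ, 0 < c ∧ ∀ (T : ℝ) (g : EuclideanSpace ℝ (Fin N) → ℝ → ℝ), IsBoundedSource T g →
      (∀ y σ, 0 ≤ g y σ) → ∀ t : ℝ, 0 < t → t ≤ T → ∀ r ∈ Set.Ioo (0 : ℝ) 1, ∀ m : ℝ, 0 ≤ m →
      ∀ x : EuclideanSpace ℝ (Fin N),
      (∀ σ ∈ Set.Ioo (r * t) t, ∀ y, y ≠ 0 → ‖y - x‖ ≤ √(t - σ) → m ≤ ‖y‖ ^ (-γ) * g y σ) →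
      c * ((1 - r) * t * m) ≤ duhamel N γ g t x := by
  have hγN : γ < N := hγ1.trans_le (by exact_mod_cast NeZero.one_le)
  obtain ⟨c, hc0, hc⟩ := exists_mul_le_heat_of_le_on_ball (N := N)
  refine ⟨c, hc0, fun T g hg hg0 t ht htT r hr m hm x hmg => ?_⟩
  have hrt : 0 < r * t := mul_pos hr.1 ht
  have hrt' : r * t ≤ t := mul_le_of_le_one_left ht.le hr.2.le
  have hint := hg.intervalIntegrable hγ0 hγ1 ht htT x
  have hint₁ := hint.mono_set (a := 0) (b := t) (c := 0) (d := r * t) (by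
    rw [Set.uIcc_of_le hrt.le, Set.uIcc_of_le ht.le]; exact Set.Icc_subset_Icc_right hrt')
  have hint₂ := hint.mono_set (a := 0) (b := t) (c := r * t) (d := t) (by
    rw [Set.uIcc_of_le hrt', Set.uIcc_of_le ht.le]; exact Set.Icc_subset_Icc_left hrt.le)
  unfold duhamel
  rw [← intervalIntegral.integral_add_adjacent_intervals hint₁ hint₂]
  have h1 : 0 ≤ ∫ σ in (0 : ℝ)..(r * t),
      ∫ y, heatKernel N (t - σ) (x - y) * ‖y‖ ^ (-γ) * g y σ := by
    have h := intervalIntegral.integral_mono_on_of_le_Ioo (f := fun _ => (0 : ℝ)) hrt.le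
      intervalIntegrable_const hint₁ fun σ hσ => integral_nonneg fun y =>
        mul_nonneg (mul_nonneg (heatKernel_nonneg (sub_pos.2 (hσ.2.trans_le hrt')) _)
          (by positivity)) (hg0 y σ)
    simpa using h
  have h2 : ∫ _ in (r * t)..t, c * m ≤ ∫ σ in (r * t)..t,
      ∫ y, heatKernel N (t - σ) (x - y) * ‖y‖ ^ (-γ) * g y σ := by
    refine intervalIntegral.integral_mono_on_of_le_Ioo hrt' intervalIntegrable_const hint₂
      fun σ hσ => ?_
    have hi := hg.integrable hγ0 hγN htT (σ := σ) ⟨(hrt.trans hσ.1).le, hσ.2⟩ x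
    simp only [mul_assoc] at hi ⊢
    exact hc (t - σ) (sub_pos.2 hσ.2) x _ m hm hi
      (fun y => mul_nonneg (by positivity) (hg0 y σ)) (hmg σ hσ)
  rw [intervalIntegral.integral_const, smul_eq_mul] at h2
  linarith

end Duhamel

section Comparison

variable {N : ℕ}

lemma integrable_heatKernel_mul {t M : ℝ} (ht : 0 < t) {f : EuclideanSpace ℝ (Fin N) → ℝ}
    (hf : Continuous f) (hM : ∀ y, |f y| ≤ M) (x : EuclideanSpace ℝ (Fin N)) :
    Integrable fun y => heatKernel N t (x - y) * f y :=
  (integrable_heatKernel ht x).mul_bdd (c := M) hf.aestronglyMeasurable (Eventually.of_forall hM)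

/-- A nontrivial nonnegative datum generates a Gaussian lower bound at parabolic scale. -/
lemma exists_gaussian_le_heat {T M : ℝ} (hT : 0 < T) {f : EuclideanSpace ℝ (Fin N) → ℝ}
    (hf : Continuous f) (hM : ∀ y, |f y| ≤ M) (hf0 : ∀ y, 0 ≤ f y) (hne : f ≠ 0) :
    ∃ (x₀ : EuclideanSpace ℝ (Fin N)) (c : ℝ), 0 < c ∧ ∀ t : ℝ, 0 < t → t ≤ T → ∀ x,
      c * Real.exp (-(1 / 2 * (‖x - x₀‖ ^ 2 / t))) ≤ ∫ y, heatKernel N t (x - y) * f y := by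
  obtain ⟨x₀, hx₀⟩ : ∃ x₀, f x₀ ≠ 0 := by
    by_contra! h
    exact hne (funext h)
  have hpos : 0 < f x₀ := lt_of_le_of_ne (hf0 x₀) hx₀.symm
  obtain ⟨r, hr0, hr⟩ := Metric.eventually_nhds_iff_ball.1
    (hf.continuousAt.eventually (lt_mem_nhds (half_lt_self hpos)))
  set V := volume.real (Metric.ball (0 : EuclideanSpace ℝ (Fin N)) 1) with hV
  have hV0 : 0 < V := ENNReal.toReal_pos (Metric.measure_ball_pos _ _ one_pos).ne'
    measure_ball_lt_top.ne
  have hsT : 0 < √T := Real.sqrt_pos.2 hT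
  refine ⟨x₀, (√(4 * π) ^ N)⁻¹ * Real.exp (-(r ^ 2 / (2 * T))) * (f x₀ / 2) * ((r / √T) ^ N * V),
    by positivity, fun t ht htT x => ?_⟩
  have hst : 0 < √t := Real.sqrt_pos.2 ht
  have hρ0 : 0 < r / √T * √t := by positivity
  have hρr : r / √T * √t ≤ r := by
    rw [div_mul_eq_mul_div, div_le_iff₀ hsT]
    gcongr
  have key := mul_le_integral_of_le_on_ball (integrable_heatKernel_mul ht hf hM x)
    (fun y => mul_nonneg (heatKernel_nonneg ht _) (hf0 y))
    (m := (√(4 * π * t) ^ N)⁻¹ * (Real.exp (-(r ^ 2 / (2 * T))) *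
      Real.exp (-(1 / 2 * (‖x - x₀‖ ^ 2 / t)))) * (f x₀ / 2)) hρ0 x₀ ?_
  · refine le_trans (le_of_eq ?_) key
    rw [Real.sqrt_mul (by positivity : 0 ≤ 4 * π) t, mul_pow, mul_pow, ← hV]
    generalize √(4 * π) = a
    field_simp
  · refine Eventually.of_forall fun y hy => ?_
    have hfy : f x₀ / 2 ≤ f y := (hr y (Metric.ball_subset_ball hρr hy)).le
    have hyx : ‖x₀ - y‖ ≤ r / √T * √t := by
      rw [← dist_eq_norm, dist_comm]; exact (Metric.mem_ball.1 hy).le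
    have hyx2 : ‖x₀ - y‖ ^ 2 ≤ r ^ 2 / T * t := by
      calc _ ≤ (r / √T * √t) ^ 2 := by gcongr
        _ = _ := by rw [mul_pow, div_pow, Real.sq_sqrt hT.le, Real.sq_sqrt ht.le]
    have htri : ‖x - y‖ ≤ ‖x - x₀‖ + ‖x₀ - y‖ := norm_sub_le_norm_sub_add_norm_sub _ _ _
    have hsq : ‖x - y‖ ^ 2 ≤ 2 * ‖x - x₀‖ ^ 2 + 2 * (r ^ 2 / T * t) := by
      calc _ ≤ (‖x - x₀‖ + ‖x₀ - y‖) ^ 2 := by gcongr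
        _ ≤ _ := by nlinarith [sq_nonneg (‖x - x₀‖ - ‖x₀ - y‖)]
    unfold heatKernel
    rw [rpow_neg_natCast_div_two (by positivity), ← Real.exp_add]
    gcongr
    rw [neg_div, ← neg_add, neg_le_neg_iff, div_le_iff₀ (by positivity)]
    refine hsq.trans (le_of_eq ?_)
    field_simp
    ring

lemma mul_exp_rpow {c D a p q : ℝ} (hc : 0 ≤ c) (hD : 0 ≤ D) :
    (c * D ^ p * Real.exp a) ^ q = c ^ q * D ^ (p * q) * Real.exp (a * q) := by
  rw [Real.mul_rpow (by positivity) (Real.exp_nonneg a), Real.mul_rpow hc (by positivity),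
    ← Real.rpow_mul hD, ← Real.exp_mul]

variable [NeZero N] {T γ q : ℝ}

/-- Any positive supersolution is bounded below by a multiple of the self-similar profile
`(t (√t + |x|)^{-γ})^{1/(1-q)}`. -/
lemma exists_profile_le_supersolution (hT : 0 < T) (hγ0 : 0 ≤ γ) (hγ1 : γ < 1) (hq0 : 0 < q)
    (hq1 : q < 1) {M : ℝ} {u₀ : EuclideanSpace ℝ (Fin N) → ℝ} (hu₀ : Continuous u₀)
    (hM : ∀ y, |u₀ y| ≤ M) (hu₀0 : ∀ y, 0 ≤ u₀ y) (hne : u₀ ≠ 0)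
    {u : EuclideanSpace ℝ (Fin N) → ℝ → ℝ} (hu0 : ∀ y σ, 0 ≤ u y σ)
    (hu : IsBoundedSource T fun y σ => u y σ ^ q)
    (hsuper : ∀ t, 0 < t → t ≤ T → ∀ x,
      (∫ y, heatKernel N t (x - y) * u₀ y) + duhamel N γ (fun y σ => u y σ ^ q) t x ≤ u x t) :
    ∃ c : ℝ, 0 < c ∧ ∀ t, 0 < t → t ≤ T → ∀ x,
      c * (t * (√t + ‖x‖) ^ (-γ)) ^ (1 - q)⁻¹ ≤ u x t := by
  obtain ⟨x₀, c₁, hc₁, hgauss⟩ := exists_gaussian_le_heat hT hu₀ hM hu₀0 hne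
  obtain ⟨c₂, hc₂, hduh⟩ := exists_mul_le_duhamel (N := N) hγ0 hγ1
  have hq1' : 0 < 1 - q := sub_pos.2 hq1
  set p := (1 - q)⁻¹ with hp
  have hp0 : 0 < p := inv_pos.2 hq1'
  have hpq : p * q + 1 = p := by rw [hp]; field_simp; ring
  set D : ℝ → EuclideanSpace ℝ (Fin N) → ℝ := fun t x => t * (√t + ‖x‖) ^ (-γ) with hD
  have hD0 : ∀ t, 0 < t → ∀ x, 0 < D t x := fun t ht x => by
    have := Real.sqrt_pos.2 ht
    positivity
  set r := q ^ (1 / 3 : ℝ) with hr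
  have hr0 : 0 < r := by positivity
  have hr1 : r < 1 := Real.rpow_lt_one hq0.le hq1 (by norm_num)
  have hr3 : q = r ^ 3 := by
    rw [hr, ← Real.rpow_natCast, ← Real.rpow_mul hq0.le]; norm_num
  have hr1' : 0 < 1 - r := sub_pos.2 hr1
  set b := r * 2 ^ (-γ) with hb
  set κ := c₂ * ((1 - r) * (b ^ (p * q) * Real.exp (-(1 / (1 - r))))) with hκ
  have hκ0 : 0 < κ := by positivity
  set Dmax := (T * √T ^ (-γ)) ^ p with hDmax
  have hsT : 0 < √T := Real.sqrt_pos.2 hT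
  have hDmax0 : 0 < Dmax := by positivity
  have hDle : ∀ t, 0 < t → t ≤ T → ∀ x, D t x ^ p ≤ Dmax := by
    intro t ht htT x
    have hst : 0 < √t := Real.sqrt_pos.2 ht
    have hsq : ∀ s : ℝ, 0 < s → s * √s ^ (-γ) = s ^ (1 - γ / 2) := fun s hs => by
      rw [Real.sqrt_eq_rpow, ← Real.rpow_mul hs.le, ← Real.rpow_one_add' hs.le (by linarith)]
      ring_nf
    refine Real.rpow_le_rpow (hD0 t ht x).le ?_ hp0.le
    calc D t x ≤ t * √t ^ (-γ) := by
          refine mul_le_mul_of_nonneg_left ?_ ht.le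
          exact Real.rpow_le_rpow_of_nonpos hst (by linarith [norm_nonneg x]) (by linarith)
      _ ≤ T * √T ^ (-γ) := by
          rw [hsq t ht, hsq T hT]
          exact Real.rpow_le_rpow ht.le htT (by linarith)
  set c := min (κ ^ p) (c₁ / Dmax) with hc
  have hc0 : 0 < c := by positivity
  have hcκ : c ≤ κ * c ^ q := by
    have h1 : c ^ (1 - q) ≤ κ := by
      calc c ^ (1 - q) ≤ (κ ^ p) ^ (1 - q) :=
            Real.rpow_le_rpow hc0.le (min_le_left _ _) hq1'.le
        _ = κ := by rw [← Real.rpow_mul hκ0.le, hp, inv_mul_cancel₀ hq1'.ne', Real.rpow_one]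
    calc c = c ^ (1 - q) * c ^ q := by rw [← Real.rpow_add hc0]; simp
      _ ≤ κ * c ^ q := by gcongr
  have hstep : ∀ k : ℝ, 0 ≤ k → k ≤ 1 →
      (∀ t, 0 < t → t ≤ T → ∀ x, c * D t x ^ p * Real.exp (-(k * (‖x - x₀‖ ^ 2 / t))) ≤ u x t) →
      ∀ t, 0 < t → t ≤ T → ∀ x,
        c * D t x ^ p * Real.exp (-(k * r * (‖x - x₀‖ ^ 2 / t))) ≤ u x t := by
    intro k hk0 hk1 hk t ht htT x
    have hst : 0 < √t := Real.sqrt_pos.2 ht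
    have hDt := hD0 t ht x
    set m := (√t + ‖x‖) ^ (-γ) * (c ^ q * (b * D t x) ^ (p * q) *
      Real.exp (-(k * r * (‖x - x₀‖ ^ 2 / t)) + -(1 / (1 - r)))) with hm
    have hlow := hduh T _ hu (fun y σ => Real.rpow_nonneg (hu0 y σ) q) t ht htT r ⟨hr0, hr1⟩ m
      (by positivity) x ?_
    · have hheat : 0 ≤ ∫ y, heatKernel N t (x - y) * u₀ y :=
        integral_nonneg fun y => mul_nonneg (heatKernel_nonneg ht _) (hu₀0 y)
      refine le_trans ?_ ((hlow.trans (le_add_of_nonneg_left hheat)).trans (hsuper t ht htT x))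
      have hDp : D t x ^ p = D t x ^ (p * q) * (t * (√t + ‖x‖) ^ (-γ)) := by
        conv_lhs => rw [← hpq, Real.rpow_add_one hDt.ne']
      rw [hm, Real.mul_rpow (by positivity) hDt.le, Real.exp_add, hDp]
      calc _ ≤ κ * c ^ q * (D t x ^ (p * q) * (t * (√t + ‖x‖) ^ (-γ))) *
            Real.exp (-(k * r * (‖x - x₀‖ ^ 2 / t))) := by gcongr
        _ = _ := by rw [hκ]; ring
    · intro σ hσ y hy hyx
      have hσ0 : 0 < σ := (mul_pos hr0 ht).trans hσ.1
      have hsσ : 0 < √σ := Real.sqrt_pos.2 hσ0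
      have hy0 : 0 < ‖y‖ := norm_pos_iff.2 hy
      have hσt : √σ ≤ √t := Real.sqrt_le_sqrt hσ.2.le
      have hyx' : ‖y - x‖ ≤ √t := hyx.trans (Real.sqrt_le_sqrt (by linarith))
      have hynorm : ‖y‖ ≤ √t + ‖x‖ := by
        have := norm_sub_norm_le y x
        linarith
      have hDσ : b * D t x ≤ D σ y := by
        have h1 : (2 * (√t + ‖x‖)) ^ (-γ) ≤ (√σ + ‖y‖) ^ (-γ) :=
          Real.rpow_le_rpow_of_nonpos (by positivity) (by linarith [norm_nonneg x]) (by linarith)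
        rw [Real.mul_rpow (by norm_num) (by positivity)] at h1
        calc b * D t x = (r * t) * (2 ^ (-γ) * (√t + ‖x‖) ^ (-γ)) := by rw [hb, hD]; ring
          _ ≤ σ * (√σ + ‖y‖) ^ (-γ) := by gcongr; exact hσ.1.le
      have hexp : k * (‖y - x₀‖ ^ 2 / σ) * q ≤
          k * r * (‖x - x₀‖ ^ 2 / t) + 1 / (1 - r) := by
        have htri : ‖y - x₀‖ ≤ ‖x - x₀‖ + ‖y - x‖ := by
          rw [add_comm]; exact norm_sub_le_norm_sub_add_norm_sub _ _ _
        have hyx2 : ‖y - x‖ ^ 2 ≤ t := by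
          calc _ ≤ √t ^ 2 := by gcongr
            _ = t := Real.sq_sqrt ht.le
        have hsq : ‖y - x₀‖ ^ 2 ≤ ‖x - x₀‖ ^ 2 / r + t / (1 - r) := by
          calc _ ≤ (‖x - x₀‖ + ‖y - x‖) ^ 2 := by gcongr
            _ ≤ ‖x - x₀‖ ^ 2 / r + ‖y - x‖ ^ 2 / (1 - r) := by
              rw [div_add_div _ _ hr0.ne' hr1'.ne', le_div_iff₀ (by positivity)]
              nlinarith [sq_nonneg ((1 - r) * ‖x - x₀‖ - r * ‖y - x‖)]
            _ ≤ _ := by gcongr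
        have hdiv : ‖y - x₀‖ ^ 2 / σ ≤ (‖x - x₀‖ ^ 2 / r + t / (1 - r)) / (r * t) := by
          gcongr
          exact hσ.1.le
        calc k * (‖y - x₀‖ ^ 2 / σ) * q
            ≤ k * ((‖x - x₀‖ ^ 2 / r + t / (1 - r)) / (r * t)) * q := by gcongr
          _ = k * r * (‖x - x₀‖ ^ 2 / t) + k * r ^ 2 * (1 / (1 - r)) := by
              rw [hr3]; field_simp
          _ ≤ k * r * (‖x - x₀‖ ^ 2 / t) + 1 * 1 ^ 2 * (1 / (1 - r)) := by gcongr
          _ = _ := by ring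
      have huq : c ^ q * (b * D t x) ^ (p * q) *
          Real.exp (-(k * r * (‖x - x₀‖ ^ 2 / t)) + -(1 / (1 - r))) ≤ u y σ ^ q := by
        have h1 := Real.rpow_le_rpow (by have := (hD0 σ hσ0 y).le; positivity)
          (hk σ hσ0 (hσ.2.le.trans htT) y) hq0.le
        rw [mul_exp_rpow hc0.le (hD0 σ hσ0 y).le] at h1
        refine le_trans ?_ h1
        gcongr
        linarith
      have hya : (√t + ‖x‖) ^ (-γ) ≤ ‖y‖ ^ (-γ) :=
        Real.rpow_le_rpow_of_nonpos hy0 hynorm (by linarith)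
      rw [hm]
      gcongr
  have hall : ∀ n : ℕ, ∀ t, 0 < t → t ≤ T → ∀ x,
      c * D t x ^ p * Real.exp (-(1 / 2 * r ^ n * (‖x - x₀‖ ^ 2 / t))) ≤ u x t := by
    intro n
    induction n with
    | zero =>
      intro t ht htT x
      have hduh0 : 0 ≤ duhamel N γ (fun y σ => u y σ ^ q) t x := by
        have h := hduh T _ hu (fun y σ => Real.rpow_nonneg (hu0 y σ) q) t ht htT r ⟨hr0, hr1⟩ 0
          le_rfl x fun σ _ y _ _ =>
            mul_nonneg (by positivity) (Real.rpow_nonneg (hu0 y σ) q)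
        simpa using h
      have h1 : c * D t x ^ p ≤ c₁ := by
        calc c * D t x ^ p ≤ c₁ / Dmax * Dmax := by
              gcongr
              · exact min_le_right _ _
              · exact hDle t ht htT x
          _ = c₁ := div_mul_cancel₀ _ hDmax0.ne'
      calc _ ≤ c₁ * Real.exp (-(1 / 2 * (‖x - x₀‖ ^ 2 / t))) := by
            rw [pow_zero, mul_one]; gcongr
        _ ≤ _ := hgauss t ht htT x
        _ ≤ _ := le_add_of_nonneg_right hduh0
        _ ≤ _ := hsuper t ht htT x
    | succ n ih =>
      have h := hstep (1 / 2 * r ^ n) (by positivity)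
        (by nlinarith [pow_le_one₀ (n := n) hr0.le hr1.le]) ih
      simpa only [pow_succ, mul_assoc] using h
  refine ⟨c, hc0, fun t ht htT x => ?_⟩
  have hlim : Tendsto (fun n : ℕ => c * D t x ^ p *
      Real.exp (-(1 / 2 * r ^ n * (‖x - x₀‖ ^ 2 / t)))) atTop (nhds (c * D t x ^ p * 1)) := by
    refine Tendsto.const_mul _ ?_
    have h := ((tendsto_pow_atTop_nhds_zero_of_lt_one hr0.le hr1).const_mul (1 / 2)).mul_const
      (‖x - x₀‖ ^ 2 / t)
    simpa using (h.neg).rexp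
  rw [mul_one] at hlim
  exact le_of_tendsto' hlim fun n => hall n t ht htT x

/-- A multiplicative bound that improves itself from `L μ` to `L μ ^ q` for every `μ ≥ 1` holds
with the constant `L`. -/
lemma le_mul_of_forall_rpow_improvement {α : Type*} (s : Set α) {f h : α → ℝ} {L μ₀ : ℝ}
    (hq0 : 0 < q) (hq1 : q < 1) (hμ₀ : 1 ≤ μ₀) (h₀ : ∀ z ∈ s, f z ≤ L * μ₀ * h z)
    (hstep : ∀ μ, 1 ≤ μ → (∀ z ∈ s, f z ≤ L * μ * h z) → ∀ z ∈ s, f z ≤ L * μ ^ q * h z) :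
    ∀ z ∈ s, f z ≤ L * h z := by
  have hμ0 : 0 < μ₀ := one_pos.trans_le hμ₀
  have hall : ∀ n : ℕ, ∀ z ∈ s, f z ≤ L * μ₀ ^ (q ^ n) * h z := by
    intro n
    induction n with
    | zero => simpa using h₀
    | succ n ih =>
      have h1 := hstep _ (Real.one_le_rpow hμ₀ (by positivity)) ih
      rw [← Real.rpow_mul hμ0.le] at h1
      simpa only [pow_succ] using h1
  intro z hz
  have hlim : Tendsto (fun n : ℕ => L * μ₀ ^ (q ^ n) * h z) atTop
      (nhds (L * μ₀ ^ (0 : ℝ) * h z)) :=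
    ((((Real.continuous_const_rpow hμ0.ne').tendsto 0).comp
      (tendsto_pow_atTop_nhds_zero_of_lt_one hq0.le hq1)).const_mul L).mul_const _
  rw [Real.rpow_zero, mul_one] at hlim
  exact ge_of_tendsto' hlim fun n => hall n z hz

/-- If `v ≤ l (u + ε)` then the integral inequalities improve the bound to
`v ≤ l ^ q (u + ε ^ q J)`, where `J` is the Duhamel term of the constant source `1`. -/
lemma subsolution_le_of_le_mul_add (hγ0 : 0 ≤ γ) (hγ1 : γ < 1) (hq0 : 0 < q) (hq1 : q < 1)
    {u₀ v₀ : EuclideanSpace ℝ (Fin N) → ℝ} (hu₀ : Continuous u₀) (hv₀ : Continuous v₀) {M : ℝ}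
    (hMu : ∀ y, |u₀ y| ≤ M) (hMv : ∀ y, |v₀ y| ≤ M) (hu₀0 : ∀ y, 0 ≤ u₀ y)
    (hle : ∀ y, v₀ y ≤ u₀ y)
    {u v : EuclideanSpace ℝ (Fin N) → ℝ → ℝ} (hu0 : ∀ y σ, 0 ≤ u y σ) (hv0 : ∀ y σ, 0 ≤ v y σ)
    (hu : IsBoundedSource T fun y σ => u y σ ^ q) (hv : IsBoundedSource T fun y σ => v y σ ^ q)
    (hsuper : ∀ t, 0 < t → t ≤ T → ∀ x,
      (∫ y, heatKernel N t (x - y) * u₀ y) + duhamel N γ (fun y σ => u y σ ^ q) t x ≤ u x t)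
    (hsub : ∀ t, 0 < t → t ≤ T → ∀ x,
      v x t ≤ (∫ y, heatKernel N t (x - y) * v₀ y) + duhamel N γ (fun y σ => v y σ ^ q) t x)
    {l ε : ℝ} (hl : 1 ≤ l) (hε : 0 ≤ ε)
    (h : ∀ t, 0 < t → t ≤ T → ∀ x, v x t ≤ l * (u x t + ε)) {t : ℝ} (ht : 0 < t) (htT : t ≤ T)
    (x : EuclideanSpace ℝ (Fin N)) :
    v x t ≤ l ^ q * (u x t + ε ^ q * duhamel N γ (fun _ _ => 1) t x) := by
  have hl0 : 0 ≤ l := zero_le_one.trans hl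
  have hlq : 1 ≤ l ^ q := Real.one_le_rpow hl hq0.le
  have hε1 := (IsBoundedSource.const (N := N) T 1).const_mul (ε ^ q)
  have hduh : duhamel N γ (fun y σ => v y σ ^ q) t x ≤
      l ^ q * (duhamel N γ (fun y σ => u y σ ^ q) t x +
        ε ^ q * duhamel N γ (fun _ _ => 1) t x) := by
    rw [← duhamel_const_mul (ε ^ q), ← duhamel_add hu hε1 hγ0 hγ1 ht htT, ← duhamel_const_mul]
    refine duhamel_mono hv ((hu.add hε1).const_mul _) hγ0 hγ1 ht htT (fun y σ hσ => ?_) x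
    have hu' := hu0 y σ
    calc v y σ ^ q ≤ (l * (u y σ + ε)) ^ q :=
          Real.rpow_le_rpow (hv0 y σ) (h σ hσ.1 (hσ.2.le.trans htT) y) hq0.le
      _ = l ^ q * (u y σ + ε) ^ q := Real.mul_rpow hl0 (by positivity)
      _ ≤ l ^ q * (u y σ ^ q + ε ^ q * 1) := by
          rw [mul_one]
          gcongr
          exact Real.rpow_add_le_add_rpow hu' hε hq0.le hq1.le
  have hheat : ∫ y, heatKernel N t (x - y) * v₀ y ≤ ∫ y, heatKernel N t (x - y) * u₀ y :=
    integral_mono (integrable_heatKernel_mul ht hv₀ hMv x) (integrable_heatKernel_mul ht hu₀ hMu x)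
      fun y => mul_le_mul_of_nonneg_left (hle y) (heatKernel_nonneg ht _)
  have hheat0 : 0 ≤ ∫ y, heatKernel N t (x - y) * u₀ y :=
    integral_nonneg fun y => mul_nonneg (heatKernel_nonneg ht _) (hu₀0 y)
  have hs := hsuper t ht htT x
  have hb := hsub t ht htT x
  nlinarith [mul_le_mul_of_nonneg_left hs (zero_le_one.trans hlq),
    mul_nonneg (sub_nonneg.2 hlq) hheat0]

/-- Comparison on a time interval `(0, T]`. -/
lemma subsolution_le_supersolution (hT : 0 < T) (hγ0 : 0 ≤ γ) (hγ1 : γ < 1) (hq0 : 0 < q)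
    (hq1 : q < 1)
    {u₀ v₀ : EuclideanSpace ℝ (Fin N) → ℝ} (hu₀ : Continuous u₀) (hv₀ : Continuous v₀) {M : ℝ}
    (hMu : ∀ y, |u₀ y| ≤ M) (hMv : ∀ y, |v₀ y| ≤ M) (hu₀0 : ∀ y, 0 ≤ u₀ y)
    (hle : ∀ y, v₀ y ≤ u₀ y) (hne : u₀ ≠ 0)
    {u v : EuclideanSpace ℝ (Fin N) → ℝ → ℝ} (hu0 : ∀ y σ, 0 ≤ u y σ) (hv0 : ∀ y σ, 0 ≤ v y σ)
    (hu : IsBoundedSource T fun y σ => u y σ ^ q) (hv : IsBoundedSource T fun y σ => v y σ ^ q)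
    {K : ℝ} (hvK : ∀ y, ∀ σ ∈ Set.Icc 0 T, v y σ ≤ K)
    (hsuper : ∀ t, 0 < t → t ≤ T → ∀ x,
      (∫ y, heatKernel N t (x - y) * u₀ y) + duhamel N γ (fun y σ => u y σ ^ q) t x ≤ u x t)
    (hsub : ∀ t, 0 < t → t ≤ T → ∀ x,
      v x t ≤ (∫ y, heatKernel N t (x - y) * v₀ y) + duhamel N γ (fun y σ => v y σ ^ q) t x)
    {t : ℝ} (ht : 0 < t) (htT : t ≤ T) (x : EuclideanSpace ℝ (Fin N)) : v x t ≤ u x t := by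
  have hq1' : 0 < 1 - q := sub_pos.2 hq1
  obtain ⟨c, hc0, hc⟩ :=
    exists_profile_le_supersolution hT hγ0 hγ1 hq0 hq1 hu₀ hMu hu₀0 hne hu0 hu hsuper
  obtain ⟨C, hC0, hC⟩ := exists_duhamel_one_le (N := N) hγ0 hγ1
  have improve := fun {l ε : ℝ} (hl : 1 ≤ l) (hε : 0 ≤ ε) h {t : ℝ} (ht : 0 < t) htT x =>
    subsolution_le_of_le_mul_add hγ0 hγ1 hq0 hq1 hu₀ hv₀ hMu hMv hu₀0 hle hu0 hv0 hu hv hsuper hsub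
      (l := l) (ε := ε) hl hε h (t := t) ht htT x
  set B := C * (c ^ (1 - q))⁻¹ with hB
  have hB0 : 0 < B := by positivity
  have hJ : ∀ t, 0 < t → t ≤ T → ∀ x,
      duhamel N γ (fun _ _ => 1) t x ≤ B * u x t ^ (1 - q) := by
    intro t ht htT x
    have hst : 0 < √t := Real.sqrt_pos.2 ht
    have h1 := Real.rpow_le_rpow (by positivity) (hc t ht htT x) hq1'.le
    rw [Real.mul_rpow hc0.le (by positivity), ← Real.rpow_mul (by positivity),
      inv_mul_cancel₀ hq1'.ne', Real.rpow_one] at h1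
    refine (hC t ht x).trans ?_
    rw [hB, mul_assoc]
    gcongr C * ?_
    rwa [le_inv_mul_iff₀ (by positivity)]
  set L := (1 + B) ^ (1 - q)⁻¹ with hL
  have hL1 : 1 ≤ L := Real.one_le_rpow (by linarith) (by positivity)
  have hL0 : 0 < L := one_pos.trans_le hL1
  have hLq : L ^ q * (1 + B) = L := by
    rw [hL, ← Real.rpow_mul (by positivity), ← Real.rpow_add_one (by positivity)]
    congr 1
    field_simp
    ring
  set s : Set (EuclideanSpace ℝ (Fin N) × ℝ) := {z | 0 < z.2 ∧ z.2 ≤ T} with hs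
  have hreg : ∀ ε, 0 < ε → ∀ z ∈ s, v z.1 z.2 ≤ L * (u z.1 z.2 + ε) := by
    intro ε hε
    refine le_mul_of_forall_rpow_improvement s hq0 hq1 (le_max_left 1 (K / ε)) ?_ ?_
    · rintro ⟨x, t⟩ ⟨ht, htT⟩
      have hu' := hu0 x t
      calc v x t ≤ K := hvK x t ⟨ht.le, htT⟩
        _ = 1 * (K / ε) * ε := by field_simp
        _ ≤ 1 * max 1 (K / ε) * ε := by gcongr; exact le_max_right _ _
        _ ≤ L * max 1 (K / ε) * (u x t + ε) := by gcongr; linarith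
    · rintro μ hμ h ⟨x, t⟩ ⟨ht, htT⟩
      have hμ0 : 0 < μ := one_pos.trans_le hμ
      have hu' := hu0 x t
      have h1 := improve (l := L * μ) (one_le_mul_of_one_le_of_one_le hL1 hμ) hε.le
        (fun t ht htT x => h (x, t) ⟨ht, htT⟩) ht htT x
      have h2 : ε ^ q * u x t ^ (1 - q) ≤ u x t + ε := by
        calc _ ≤ (u x t + ε) ^ q * (u x t + ε) ^ (1 - q) := by
              gcongr <;> linarith
          _ = u x t + ε := by rw [← Real.rpow_add (by positivity)]; simp
      have h3 : ε ^ q * duhamel N γ (fun _ _ => 1) t x ≤ B * (u x t + ε) := by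
        calc _ ≤ ε ^ q * (B * u x t ^ (1 - q)) := by gcongr; exact hJ t ht htT x
          _ = B * (ε ^ q * u x t ^ (1 - q)) := by ring
          _ ≤ _ := by gcongr
      calc v x t ≤ _ := h1
        _ ≤ (L * μ) ^ q * ((1 + B) * (u x t + ε)) := by gcongr; linarith
        _ = L ^ q * (1 + B) * μ ^ q * (u x t + ε) := by
            rw [Real.mul_rpow hL0.le hμ0.le]; ring
        _ = _ := by rw [hLq]
  have hfin : ∀ z ∈ s, v z.1 z.2 ≤ 1 * u z.1 z.2 := by
    refine le_mul_of_forall_rpow_improvement s hq0 hq1 hL1 ?_ ?_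
    · intro z hz
      rw [one_mul]
      refine le_of_forall_pos_le_add fun δ hδ => ?_
      have := hreg (δ / L) (by positivity) z hz
      rwa [mul_add, mul_div_cancel₀ _ hL0.ne'] at this
    · rintro μ hμ h ⟨x, t⟩ ⟨ht, htT⟩
      have h1 := improve (l := μ) hμ le_rfl
        (fun t ht htT x => by simpa using h (x, t) ⟨ht, htT⟩) ht htT x
      simpa [Real.zero_rpow hq0.ne'] using h1
  simpa using hfin (x, t) ⟨ht, htT⟩

end Comparison

section Admissible

variable {N : ℕ}

lemma exists_abs_le_of_tendsto_cocompact {f : EuclideanSpace ℝ (Fin N) → ℝ} (hf : Continuous f)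
    (h : Tendsto f (cocompact (EuclideanSpace ℝ (Fin N))) (nhds 0)) : ∃ M, ∀ x, |f x| ≤ M := by
  let F : ZeroAtInftyContinuousMap (EuclideanSpace ℝ (Fin N)) ℝ := ⟨⟨f, hf⟩, h⟩
  exact ⟨‖F.toBCF‖, fun x => F.toBCF.norm_coe_le_norm x⟩

variable {w : EuclideanSpace ℝ (Fin N) → ℝ → ℝ}

lemma IsAdmissible.continuous_uncurry (hw : IsAdmissible N w) :
    Continuous fun p : ℝ × EuclideanSpace ℝ (Fin N) => w p.2 (max p.1 0) := by
  obtain ⟨-, hcont, -, hunif⟩ := hw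
  rw [continuous_iff_continuousAt]
  rintro ⟨t₀, x₀⟩
  rw [ContinuousAt, Metric.tendsto_nhds]
  intro ε hε
  obtain ⟨δ, hδ, h⟩ := hunif (max t₀ 0) (le_max_right _ _) (ε / 2) (half_pos hε)
  have h1 : ∀ᶠ p : ℝ × EuclideanSpace ℝ (Fin N) in nhds (t₀, x₀),
      |max p.1 0 - max t₀ 0| < δ := by
    have hc : Continuous fun p : ℝ × EuclideanSpace ℝ (Fin N) => |max p.1 0 - max t₀ 0| := by
      fun_prop
    exact hc.continuousAt.eventually_lt continuousAt_const (by simpa using hδ)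
  have h2 : ∀ᶠ p : ℝ × EuclideanSpace ℝ (Fin N) in nhds (t₀, x₀),
      |w p.2 (max t₀ 0) - w x₀ (max t₀ 0)| < ε / 2 := by
    have hc : Continuous fun p : ℝ × EuclideanSpace ℝ (Fin N) =>
        |w p.2 (max t₀ 0) - w x₀ (max t₀ 0)| :=
      (((hcont _ (le_max_right _ _)).comp continuous_snd).sub continuous_const).abs
    exact hc.continuousAt.eventually_lt continuousAt_const (by simpa using hε)
  filter_upwards [h1, h2] with p hp1 hp2
  rw [Real.dist_eq]
  calc _ ≤ |w p.2 (max p.1 0) - w p.2 (max t₀ 0)| + |w p.2 (max t₀ 0) - w x₀ (max t₀ 0)| :=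
        abs_sub_le _ _ _
    _ < ε / 2 + ε / 2 := add_lt_add_of_le_of_lt (h _ (le_max_right _ _) hp1 p.2) hp2
    _ = ε := add_halves ε

lemma IsAdmissible.exists_le (hw : IsAdmissible N w) (T : ℝ) :
    ∃ M, ∀ x, ∀ t ∈ Set.Icc 0 T, w x t ≤ M := by
  obtain ⟨-, hcont, hlim, hunif⟩ := hw
  refine isCompact_Icc.induction_on (p := fun s => ∃ M, ∀ x, ∀ t ∈ s, w x t ≤ M) ?_ ?_ ?_ ?_
  · simp
  · rintro s s' hss ⟨M, hM⟩
    exact ⟨M, fun x t ht => hM x t (hss ht)⟩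
  · rintro s s' ⟨M, hM⟩ ⟨M', hM'⟩
    refine ⟨max M M', fun x t ht => ?_⟩
    rcases ht with ht | ht
    · exact (hM x t ht).trans (le_max_left _ _)
    · exact (hM' x t ht).trans (le_max_right _ _)
  · intro t₀ ht₀
    obtain ⟨M, hM⟩ := exists_abs_le_of_tendsto_cocompact (hcont t₀ ht₀.1) (hlim t₀ ht₀.1)
    obtain ⟨δ, hδ, h⟩ := hunif t₀ ht₀.1 1 one_pos
    refine ⟨Set.Icc 0 T ∩ Metric.ball t₀ δ,
      inter_mem_nhdsWithin _ (Metric.ball_mem_nhds t₀ hδ), M + 1, fun x t ht => ?_⟩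
    have h1 := (abs_le.1 (h t ht.1.1 (by simpa [Real.dist_eq] using ht.2) x)).2
    have h2 := (abs_le.1 (hM x)).2
    linarith

lemma IsAdmissible.isBoundedSource_rpow (hw : IsAdmissible N w) {q : ℝ} (hq : 0 < q) (T : ℝ) :
    IsBoundedSource T fun y σ => w y (max σ 0) ^ q := by
  obtain ⟨M, hM⟩ := hw.exists_le T
  refine ⟨hw.continuous_uncurry.measurable.pow_const q, M ^ q, fun y σ hσ => ?_⟩
  have h0 := hw.1 y (max σ 0) (le_max_right _ _)
  rw [abs_of_nonneg (by positivity)]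
  rw [max_eq_left hσ.1] at h0 ⊢
  exact Real.rpow_le_rpow h0 (hM y σ hσ) hq.le

lemma duhamel_max_zero (γ q : ℝ) (w : EuclideanSpace ℝ (Fin N) → ℝ → ℝ) {t : ℝ} (ht : 0 < t)
    (x : EuclideanSpace ℝ (Fin N)) :
    duhamel N γ (fun y σ => w y (max σ 0) ^ q) t x = duhamel N γ (fun y σ => w y σ ^ q) t x := by
  refine intervalIntegral.integral_congr_Ioo_of_le ht.le fun σ hσ => ?_
  simp only [max_eq_left hσ.1.le]

end Admissible

/-- Comparison principle for super- and sub-solutions of the integral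
formulation of `u_t - Δu = |x|^{-γ} u^q`, `0 < q < 1`, for `γ > 0` small:
if `u₀ ≥ v₀ ≥ 0`, `u₀ ≢ 0`, `u` is a super-solution with data `u₀` and `v`
is a sub-solution with data `v₀`, then `u ≥ v` everywhere. -/
theorem comparison_small_gamma (N : ℕ) (hN : 1 ≤ N) (q : ℝ)
    (hq0 : 0 < q) (hq1 : q < 1) :
    ∃ γstar : ℝ, 0 < γstar ∧
      ∀ γ : ℝ, 0 < γ → γ < γstar →
        ∀ u₀ v₀ : EuclideanSpace ℝ (Fin N) → ℝ,
          Continuous u₀ → Continuous v₀ →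
          Tendsto u₀ (cocompact (EuclideanSpace ℝ (Fin N))) (nhds 0) →
          Tendsto v₀ (cocompact (EuclideanSpace ℝ (Fin N))) (nhds 0) →
          (∀ x, 0 ≤ v₀ x) → (∀ x, v₀ x ≤ u₀ x) → u₀ ≠ 0 →
          ∀ u v : EuclideanSpace ℝ (Fin N) → ℝ → ℝ,
            IsAdmissible N u → IsAdmissible N v →
            -- super-solution inequality for u (at t = 0 it reads u(x,0) ≥ u₀(x))
            (∀ x, u₀ x ≤ u x 0) →
            (∀ t, 0 < t → ∀ x,
              (∫ y, heatKernel N t (x - y) * u₀ y) +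
                (∫ σ in (0 : ℝ)..t, ∫ y,
                  heatKernel N (t - σ) (x - y) * ‖y‖ ^ (-γ) * u y σ ^ q)
                ≤ u x t) →
            -- sub-solution inequality for v (at t = 0 it reads v(x,0) ≤ v₀(x))
            (∀ x, v x 0 ≤ v₀ x) →
            (∀ t, 0 < t → ∀ x,
              v x t ≤ (∫ y, heatKernel N t (x - y) * v₀ y) +
                ∫ σ in (0 : ℝ)..t, ∫ y,
                  heatKernel N (t - σ) (x - y) * ‖y‖ ^ (-γ) * v y σ ^ q) →
            ∀ x t, 0 ≤ t → v x t ≤ u x t := by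
  refine ⟨1, one_pos, fun γ hγ0 hγ1 u₀ v₀ hu₀ hv₀ hu₀lim hv₀lim hv₀0 hle hne u v hu hv hu_init
    hsuper hv_init hsub x t ht => ?_⟩
  have : NeZero N := ⟨by omega⟩
  rcases ht.eq_or_lt with rfl | ht
  · exact (hv_init x).trans ((hle x).trans (hu_init x))
  obtain ⟨M₁, hM₁⟩ := exists_abs_le_of_tendsto_cocompact hu₀ hu₀lim
  obtain ⟨M₂, hM₂⟩ := exists_abs_le_of_tendsto_cocompact hv₀ hv₀lim
  obtain ⟨K, hK⟩ := hv.exists_le t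
  have key := subsolution_le_supersolution (T := t) (γ := γ) (q := q) (M := max M₁ M₂) (K := K)
    (u := fun y σ => u y (max σ 0)) (v := fun y σ => v y (max σ 0)) ht hγ0.le hγ1 hq0 hq1 hu₀ hv₀
    (fun y => (hM₁ y).trans (le_max_left _ _)) (fun y => (hM₂ y).trans (le_max_right _ _))
    (fun y => (hv₀0 y).trans (hle y)) hle hne
    (fun y σ => hu.1 y _ (le_max_right _ _)) (fun y σ => hv.1 y _ (le_max_right _ _))
    (hu.isBoundedSource_rpow hq0 t) (hv.isBoundedSource_rpow hq0 t)
    (fun y σ hσ => by simpa only [max_eq_left hσ.1] using hK y σ hσ)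
    (fun s hs _ x => by
      rw [duhamel_max_zero γ q u hs, max_eq_left hs.le]; exact hsuper s hs x)
    (fun s hs _ x => by
      rw [duhamel_max_zero γ q v hs, max_eq_left hs.le]; exact hsub s hs x)
    ht le_rfl x
  simpa only [max_eq_left ht.le] using key
end

section
/- Let N ≥ 1, t > 0, and let f : [0,∞) → ℝ be a C¹ function with f'(r) ≤ 0 for all r > 0, such that the function y ↦ exp(−|x−y|²/(4t)) f(|y|) is integrable on ℝ^N for every x ∈ ℝ^N. Define F(x) = (4πt)^{−N/2} ∫_{ℝ^N} exp(−|x−y|²/(4t)) f(|y|) dy. Then F attains its maximum at x = 0; that is, F(x) ≤ F(0) for all x ∈ ℝ^N. -/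
open MeasureTheory Real

/-- The convolution of two radially antitone functions is maximal at the origin: integrate
`(g |y| - g |x - y|) * (h |y| - h |x - y|) ≥ 0` over `y`. -/
theorem integral_radial_antitone_mul_le {E : Type*} [NormedAddCommGroup E] [MeasurableSpace E]
    [BorelSpace E] {μ : Measure E} [μ.IsAddLeftInvariant] [μ.IsNegInvariant]
    {g h : ℝ → ℝ}
    (hg : AntitoneOn g (Set.Ici 0)) (hh : AntitoneOn h (Set.Ici 0)) (x : E)
    (hx : Integrable (fun y => g ‖x - y‖ * h ‖y‖) μ)
    (h0 : Integrable (fun y => g ‖y‖ * h ‖y‖) μ) :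
    ∫ y, g ‖x - y‖ * h ‖y‖ ∂μ ≤ ∫ y, g ‖y‖ * h ‖y‖ ∂μ := by
  have hx' : Integrable (fun y => g ‖y‖ * h ‖x - y‖) μ := by
    simpa using hx.comp_sub_left x
  have h0' : Integrable (fun y => g ‖x - y‖ * h ‖x - y‖) μ := h0.comp_sub_left x
  have ex : ∫ y, g ‖y‖ * h ‖x - y‖ ∂μ = ∫ y, g ‖x - y‖ * h ‖y‖ ∂μ := by
    simpa using integral_sub_left_eq_self (fun y => g ‖x - y‖ * h ‖y‖) μ x
  have e0 : ∫ y, g ‖x - y‖ * h ‖x - y‖ ∂μ = ∫ y, g ‖y‖ * h ‖y‖ ∂μ :=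
    integral_sub_left_eq_self (fun y => g ‖y‖ * h ‖y‖) μ x
  have key : ∫ y, (g ‖x - y‖ * h ‖y‖ + g ‖y‖ * h ‖x - y‖) ∂μ
      ≤ ∫ y, (g ‖y‖ * h ‖y‖ + g ‖x - y‖ * h ‖x - y‖) ∂μ := by
    refine integral_mono (hx.add hx') (h0.add h0') fun y => ?_
    have hy : ‖y‖ ∈ Set.Ici (0 : ℝ) := norm_nonneg y
    have hxy : ‖x - y‖ ∈ Set.Ici (0 : ℝ) := norm_nonneg (x - y)
    rcases le_total ‖y‖ ‖x - y‖ with hle | hle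
    · nlinarith [mul_nonneg (sub_nonneg.2 (hg hy hxy hle)) (sub_nonneg.2 (hh hy hxy hle))]
    · nlinarith [mul_nonneg (sub_nonneg.2 (hg hxy hy hle)) (sub_nonneg.2 (hh hxy hy hle))]
  rw [integral_add hx hx', integral_add h0 h0', ex, e0] at key
  linarith

/-- If `f : [0,∞) → ℝ` is `C¹` with `f'(r) ≤ 0` for `r > 0`, then the
convolution of the heat kernel with the radial function `y ↦ f(|y|)`
attains its maximum at the origin. -/
theorem heat_convolution_radial_max_at_zero (N : ℕ) (hN : 1 ≤ N)
    (t : ℝ) (ht : 0 < t) (f : ℝ → ℝ)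
    (hf : ContDiffOn ℝ 1 f (Set.Ici 0))
    (hf' : ∀ r : ℝ, 0 < r → deriv f r ≤ 0)
    (hint : ∀ x : EuclideanSpace ℝ (Fin N),
      Integrable (fun y : EuclideanSpace ℝ (Fin N) =>
        Real.exp (-‖x - y‖ ^ 2 / (4 * t)) * f ‖y‖)) :
    ∀ x : EuclideanSpace ℝ (Fin N),
      (4 * π * t) ^ (-(N : ℝ) / 2) *
          ∫ y : EuclideanSpace ℝ (Fin N), Real.exp (-‖x - y‖ ^ 2 / (4 * t)) * f ‖y‖
        ≤ (4 * π * t) ^ (-(N : ℝ) / 2) *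
            ∫ y : EuclideanSpace ℝ (Fin N), Real.exp (-‖(0 : EuclideanSpace ℝ (Fin N)) - y‖ ^ 2 / (4 * t)) * f ‖y‖ := by
  intro x
  have hanti : AntitoneOn f (Set.Ici 0) := by
    refine antitoneOn_of_deriv_nonpos (convex_Ici 0) hf.continuousOn ?_ ?_
    · exact (hf.differentiableOn one_ne_zero).mono interior_subset
    · intro r hr
      rw [interior_Ici] at hr
      exact hf' r hr
  have hgauss : AntitoneOn (fun r : ℝ => Real.exp (-r ^ 2 / (4 * t))) (Set.Ici 0) := by
    intro a ha b _ hab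
    have ha' : 0 ≤ a := ha
    dsimp only
    gcongr
  have h0 := hint 0
  simp only [zero_sub, norm_neg] at h0 ⊢
  exact mul_le_mul_of_nonneg_left
    (integral_radial_antitone_mul_le hgauss hanti x (hint x) h0) (by positivity)
end

section
/- Let T > 0, 0 ≤ α < 1, A ≥ 0 and M > 0. Let ψ : [0,T] → [0,∞) be a measurable essentially bounded function satisfying ψ(t) ≤ A + M ∫₀ᵗ (t−τ)^{−α} ψ(τ) dτ for almost every t ∈ [0,T]. Then there exists a constant C, depending only on M, α and T, such that ψ(t) ≤ A·C for almost every t ∈ [0,T]. In particular, if A = 0 then ψ = 0 almost everywhere on [0,T]. -/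
open MeasureTheory Real

/-- The Laplace integrand `s ^ (-α) * exp (-(l * s))` is integrable on the half-line. -/
lemma integrableOn_rpow_neg_mul_exp {α l : ℝ} (hα1 : α < 1) (hl : 0 < l) :
    IntegrableOn (fun s : ℝ => s ^ (-α) * exp (-(l * s))) (Set.Ioi 0) := by
  have h := integrableOn_rpow_mul_exp_neg_mul_rpow (p := 1) (s := -α) (b := l)
    (by linarith) one_pos hl
  simpa using h

/-- The singular kernel applied to `exp (l * ·)` is dominated by `exp (l * t)` times the Laplace
transform of the kernel. -/
lemma singular_integral_exp_le {α l t : ℝ} (hα1 : α < 1) (hl : 0 < l) (ht : 0 ≤ t) :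
    IntervalIntegrable (fun τ : ℝ => (t - τ) ^ (-α) * exp (l * τ)) volume 0 t ∧
    ∫ τ in (0 : ℝ)..t, (t - τ) ^ (-α) * exp (l * τ) ≤
      exp (l * t) * ((1 / l) ^ (1 - α) * Gamma (1 - α)) := by
  have hint := integrableOn_rpow_neg_mul_exp hα1 hl
  have hval : ∫ s in Set.Ioi (0 : ℝ), s ^ (-α) * exp (-(l * s)) =
      (1 / l) ^ (1 - α) * Gamma (1 - α) := by
    rw [← integral_rpow_mul_exp_neg_mul_Ioi (by linarith) hl]
    simp
  have hint' : IntervalIntegrable (fun s : ℝ => s ^ (-α) * exp (-(l * s))) volume 0 t :=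
    (intervalIntegrable_iff_integrableOn_Ioc_of_le ht).2
      (hint.mono_set Set.Ioc_subset_Ioi_self)
  have hfun : (fun τ : ℝ => (t - τ) ^ (-α) * exp (l * τ)) =
      fun τ => exp (l * t) * ((t - τ) ^ (-α) * exp (-(l * (t - τ)))) := by
    funext τ
    rw [mul_left_comm, ← exp_add]
    ring_nf
  rw [hfun]
  constructor
  · have h := (hint'.comp_sub_left t).symm
    simp only [sub_zero, sub_self] at h
    exact h.const_mul _
  · rw [intervalIntegral.integral_const_mul,
      intervalIntegral.integral_comp_sub_left (fun s : ℝ => s ^ (-α) * exp (-(l * s))) t,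
      sub_self, sub_zero, intervalIntegral.integral_of_le ht, ← hval]
    refine mul_le_mul_of_nonneg_left (setIntegral_mono_set hint ?_
      Set.Ioc_subset_Ioi_self.eventuallyLE) (exp_pos _).le
    filter_upwards [ae_restrict_mem measurableSet_Ioi] with s hs
    have : (0 : ℝ) < s := hs
    positivity

/-- For a large enough rate `l`, the Laplace transform of `M * s ^ (-α)` at `l` is at most
one half. -/
lemma exists_rate_laplace_le_half {α : ℝ} (M : ℝ) (hα1 : α < 1) :
    ∃ l : ℝ, 0 < l ∧ M * ((1 / l) ^ (1 - α) * Gamma (1 - α)) ≤ 1 / 2 := by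
  have h : Filter.Tendsto (fun l : ℝ => M * (l ^ (-(1 - α)) * Gamma (1 - α))) Filter.atTop
      (nhds (M * (0 * Gamma (1 - α)))) :=
    ((tendsto_rpow_neg_atTop (by linarith)).mul_const _).const_mul _
  rw [zero_mul, mul_zero] at h
  obtain ⟨l, hl, hl0⟩ := ((h.eventually_le_const (by norm_num : (0 : ℝ) < 1 / 2)).and
    (Filter.eventually_gt_atTop 0)).exists
  refine ⟨l, hl0, ?_⟩
  rwa [one_div l, inv_rpow hl0.le, ← rpow_neg hl0.le]

/-- One bootstrap step: an exponential bound with constant `K` improves to one with constant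
`A + K / 2`. -/
lemma singular_gronwall_improve {T α M l A K : ℝ} {ψ : ℝ → ℝ} (hα1 : α < 1) (hM : 0 < M)
    (hl : 0 < l) (hlM : M * ((1 / l) ^ (1 - α) * Gamma (1 - α)) ≤ 1 / 2)
    (hA : 0 ≤ A) (hK : 0 ≤ K) (hψ0 : ∀ t ∈ Set.Icc (0 : ℝ) T, 0 ≤ ψ t)
    (hψ : ∀ᵐ t ∂volume.restrict (Set.Icc 0 T),
      ψ t ≤ A + M * ∫ τ in (0 : ℝ)..t, (t - τ) ^ (-α) * ψ τ)
    (hψK : ∀ᵐ t ∂volume.restrict (Set.Icc 0 T), ψ t ≤ K * exp (l * t)) :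
    ∀ᵐ t ∂volume.restrict (Set.Icc 0 T), ψ t ≤ (A + K / 2) * exp (l * t) := by
  filter_upwards [hψ, ae_restrict_mem measurableSet_Icc] with t ht htT
  obtain ⟨hint, hle⟩ := singular_integral_exp_le hα1 hl htT.1
  have hsub : Set.Ioc 0 t ⊆ Set.Icc 0 T := fun τ hτ => ⟨hτ.1.le, hτ.2.trans htT.2⟩
  have hmono : ∫ τ in (0 : ℝ)..t, (t - τ) ^ (-α) * ψ τ ≤
      ∫ τ in (0 : ℝ)..t, K * ((t - τ) ^ (-α) * exp (l * τ)) := by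
    rw [intervalIntegral.integral_of_le htT.1, intervalIntegral.integral_of_le htT.1]
    refine integral_mono_of_nonneg ?_ (hint.const_mul K).1 ?_
    · filter_upwards [ae_restrict_mem measurableSet_Ioc] with τ hτ
      exact mul_nonneg (rpow_nonneg (sub_nonneg.2 hτ.2) _) (hψ0 τ (hsub hτ))
    · filter_upwards [ae_restrict_mem measurableSet_Ioc,
        ae_restrict_of_ae_restrict_of_subset hsub hψK] with τ hτ hτK
      rw [mul_left_comm]
      exact mul_le_mul_of_nonneg_left hτK (rpow_nonneg (sub_nonneg.2 hτ.2) _)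
  rw [intervalIntegral.integral_const_mul] at hmono
  have hexp : 1 ≤ exp (l * t) := one_le_exp (mul_nonneg hl.le htT.1)
  calc ψ t ≤ A + M * (K * (exp (l * t) * ((1 / l) ^ (1 - α) * Gamma (1 - α)))) := by
        refine ht.trans ?_
        gcongr
        exact hmono.trans (by gcongr)
    _ = A * 1 + K * exp (l * t) * (M * ((1 / l) ^ (1 - α) * Gamma (1 - α))) := by ring
    _ ≤ A * exp (l * t) + K * exp (l * t) * (1 / 2) := by gcongr
    _ = (A + K / 2) * exp (l * t) := by ring

/-- Singular (Gronwall–Henry) Gronwall inequality: if a non-negative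
essentially bounded measurable `ψ` on `[0,T]` satisfies
`ψ(t) ≤ A + M ∫₀ᵗ (t-τ)^{-α} ψ(τ) dτ` for a.e. `t ∈ [0,T]`, with
`0 ≤ α < 1`, then `ψ(t) ≤ A·C(M,α,T)` for a.e. `t ∈ [0,T]`. The constant
`C` depends only on `M`, `α` and `T` (in particular not on `A` or `ψ`). -/
theorem singular_gronwall (T α M : ℝ) (hT : 0 < T) (hα0 : 0 ≤ α)
    (hα1 : α < 1) (hM : 0 < M) :
    ∃ C : ℝ, 0 < C ∧
      ∀ A : ℝ, 0 ≤ A →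
        ∀ ψ : ℝ → ℝ,
          AEMeasurable ψ (volume.restrict (Set.Icc 0 T)) →
          (∀ t ∈ Set.Icc (0 : ℝ) T, 0 ≤ ψ t) →
          (∃ B : ℝ, ∀ᵐ t ∂volume.restrict (Set.Icc 0 T), ψ t ≤ B) →
          (∀ᵐ t ∂volume.restrict (Set.Icc 0 T),
            ψ t ≤ A + M * ∫ τ in (0 : ℝ)..t, (t - τ) ^ (-α) * ψ τ) →
          ∀ᵐ t ∂volume.restrict (Set.Icc 0 T), ψ t ≤ A * C := by
  obtain ⟨l, hl, hlM⟩ := exists_rate_laplace_le_half M hα1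
  refine ⟨2 * exp (l * T), by positivity, fun A hA ψ _ hψ0 ⟨B, hB⟩ hψ => ?_⟩
  have hiter : ∀ n : ℕ, ∀ᵐ t ∂volume.restrict (Set.Icc 0 T),
      ψ t ≤ (2 * A + |B| * (1 / 2) ^ n) * exp (l * t) := by
    intro n
    induction n with
    | zero =>
      filter_upwards [hB, ae_restrict_mem measurableSet_Icc] with t ht htT
      have hexp : 1 ≤ exp (l * t) := one_le_exp (mul_nonneg hl.le htT.1)
      calc ψ t ≤ (2 * A + |B| * (1 / 2) ^ 0) * 1 := by linarith [le_abs_self B]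
        _ ≤ (2 * A + |B| * (1 / 2) ^ 0) * exp (l * t) := by gcongr
    | succ n ih =>
      have h := singular_gronwall_improve hα1 hM hl hlM hA (by positivity) hψ0 hψ ih
      convert h using 4
      ring
  filter_upwards [ae_all_iff.2 hiter, ae_restrict_mem measurableSet_Icc] with t ht htT
  have hlim : Filter.Tendsto (fun n : ℕ => (2 * A + |B| * (1 / 2 : ℝ) ^ n) * exp (l * t))
      Filter.atTop (nhds ((2 * A + |B| * 0) * exp (l * t))) :=
    (((tendsto_pow_atTop_nhds_zero_of_lt_one (by norm_num) (by norm_num)).const_mul _).const_add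
      _).mul_const _
  calc ψ t ≤ (2 * A + |B| * 0) * exp (l * t) := ge_of_tendsto' hlim ht
    _ = A * (2 * exp (l * t)) := by ring
    _ ≤ A * (2 * exp (l * T)) := by
      gcongr
      exact htT.2
end
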